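/- Let K be a field and let J = ⟨x_5^2, x_4, x_3^3x_5, x_3^6, x_1x_5⟩ ⊂ K[x_1,…,x_5]. Then the Hilbert function H of K[x_1,…,x_5]/J satisfies H(0) = 1, H(1) = 4, H(2) = 8, H(3) = 13, and H(r) = 6r − 6 for all r ≥ 4; in particular, H is non-decreasing. -/

import Mathlib

open MvPolynomial

/-- The Hilbert function of `P/J` for an ideal `J` of a polynomial ring `P`:
`H_J(k) = dim_K P_k − dim_K (J ∩ P_k)`. -/
noncomputable def hilbertFn {K : Type*} [Field K] {σ : Type*}
    (J : Ideal (MvPolynomial σ K)) (k : ℕ) : ℕ :=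
  Module.finrank K (homogeneousSubmodule σ K k) -
    Module.finrank K
      (Submodule.restrictScalars K J ⊓ homogeneousSubmodule σ K k :
        Submodule K (MvPolynomial σ K))

/-!
A monomial ideal is spanned over `K` by the monomials it contains, so the Hilbert function of its
quotient counts the standard monomials, those divisible by no generator. Here these are
`x_1^a x_2^b x_3^c` with `c < 6`, of which there are `r + 1 - c` in degree `r` for each `c`, and
`x_2^b x_3^c x_5` with `c < 3`, of which there are `min 3 r`. Hence
`H(r) = ∑_{c < 6} (r + 1 - c) + min 3 r` with truncated subtraction, and every term is
non-decreasing in `r`.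
-/

section MonomialIdeals

variable {σ : Type*}

lemma finrank_restrictSupport (R : Type*) [CommSemiring R] [StrongRankCondition R]
    (s : Set (σ →₀ ℕ)) : Module.finrank R (restrictSupport R s) = s.ncard :=
  Module.finrank_eq_nat_card_basis (basisRestrictSupport R s)

lemma restrictSupport_inter (R : Type*) [CommSemiring R] (s t : Set (σ →₀ ℕ)) :
    restrictSupport R (s ∩ t) = restrictSupport R s ⊓ restrictSupport R t := by
  ext p
  exact Set.subset_inter_iff

lemma restrictScalars_span_monomial_image (R : Type*) [CommSemiring R] (S : Set (σ →₀ ℕ)) :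
    (Ideal.span ((fun s ↦ monomial s (1 : R)) '' S)).restrictScalars R =
      restrictSupport R (upperClosure S : Set (σ →₀ ℕ)) := by
  ext p
  exact mem_ideal_span_monomial_image

/-- The exponents of the standard monomials of degree `k` for the ideal generated by the monomials
with exponents in `S`: those of degree `k` that are divisible by none of the generators. -/
def standardExponents (S : Set (σ →₀ ℕ)) (k : ℕ) : Set (σ →₀ ℕ) :=
  {d | d.degree = k} \ upperClosure S

lemma finite_setOf_degree_eq [Finite σ] (k : ℕ) : {d : σ →₀ ℕ | d.degree = k}.Finite :=
  (Finsupp.finite_of_degree_le k).subset fun _ hd ↦ le_of_eq hd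

lemma finite_standardExponents [Finite σ] (S : Set (σ →₀ ℕ)) (k : ℕ) :
    (standardExponents S k).Finite :=
  (finite_setOf_degree_eq k).sdiff

theorem hilbertFn_span_monomial_image [Finite σ] (K : Type*) [Field K] (S : Set (σ →₀ ℕ))
    (k : ℕ) :
    hilbertFn (Ideal.span ((fun s ↦ monomial s (1 : K)) '' S)) k =
      (standardExponents S k).ncard := by
  have homogeneous_eq :
      homogeneousSubmodule σ K k = restrictSupport K {d : σ →₀ ℕ | d.degree = k} :=
    homogeneousSubmodule_eq_finsupp_supported σ K k
  rw [hilbertFn, restrictScalars_span_monomial_image, homogeneous_eq,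
    ← restrictSupport_inter, finrank_restrictSupport, finrank_restrictSupport, standardExponents,
    Set.inter_comm,
    ← Set.ncard_inter_add_ncard_sdiff_eq_ncard _ (upperClosure S : Set (σ →₀ ℕ))
      (finite_setOf_degree_eq k), Nat.add_sub_cancel_left]

end MonomialIdeals

open Finsupp in
/-- The exponents of the generators `x_5^2`, `x_4`, `x_3^3 x_5`, `x_3^6`, `x_1 x_5` of `J`; the
variable `x_i` has index `i - 1`. -/
noncomputable def generatorExponents : Set (Fin 5 →₀ ℕ) :=
  {single 4 2, single 3 1, single 2 3 + single 4 1, single 2 6, single 0 1 + single 4 1}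

lemma monomial_image_generatorExponents (R : Type*) [CommSemiring R] :
    (fun s ↦ monomial s (1 : R)) '' generatorExponents =
      {X 4 ^ 2, X 3, X 2 ^ 3 * X 4, X 2 ^ 6, X 0 * X 4} := by
  simp only [generatorExponents, Set.image_insert_eq, Set.image_singleton, X, monomial_pow,
    monomial_mul, one_pow, mul_one, Finsupp.smul_single, smul_eq_mul]

lemma mem_upperClosure_generatorExponents {d : Fin 5 →₀ ℕ} :
    d ∈ upperClosure generatorExponents ↔
      2 ≤ d 4 ∨ 1 ≤ d 3 ∨ (3 ≤ d 2 ∧ 1 ≤ d 4) ∨ 6 ≤ d 2 ∨ (1 ≤ d 0 ∧ 1 ≤ d 4) := by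
  simp [mem_upperClosure, generatorExponents, Finsupp.le_def, Fin.forall_fin_succ]

lemma mem_standardExponents_generatorExponents {d : Fin 5 →₀ ℕ} {r : ℕ} :
    d ∈ standardExponents generatorExponents r ↔
      d 3 = 0 ∧ (d 4 = 0 ∧ d 2 < 6 ∧ d 0 + d 1 + d 2 = r ∨
        d 4 = 1 ∧ d 0 = 0 ∧ d 2 < 3 ∧ d 1 + d 2 + 1 = r) := by
  rw [standardExponents, Set.mem_sdiff, SetLike.mem_coe, mem_upperClosure_generatorExponents,
    Set.mem_ofPred_eq, Finsupp.degree_eq_sum, Fin.sum_univ_five]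
  omega

lemma ncard_standardExponents_inter_four_eq_zero (r : ℕ) :
    (standardExponents generatorExponents r ∩ {d | d 4 = 0}).ncard =
      ∑ c ∈ Finset.range 6, (r + 1 - c) := by
  have bijOn : Set.BijOn (fun d : Fin 5 →₀ ℕ ↦ (⟨d 2, d 0⟩ : Σ _ : ℕ, ℕ))
      (standardExponents generatorExponents r ∩ {d | d 4 = 0})
      ((Finset.range 6).sigma fun c ↦ Finset.range (r + 1 - c)) := by
    simp only [Set.BijOn, Set.MapsTo, Set.InjOn, Set.SurjOn, Set.subset_def, Set.mem_inter_iff,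
      mem_standardExponents_generatorExponents, Set.mem_ofPred_eq, Set.mem_image, Finset.mem_coe,
      Finset.mem_sigma, Finset.mem_range]
    refine ⟨fun d hd ↦ by omega, fun d hd d' hd' h ↦ ?_, fun ⟨c, a⟩ hca ↦ ?_⟩
    · simp only [Sigma.mk.injEq, heq_eq_eq] at h
      ext i
      fin_cases i <;> dsimp <;> omega
    · obtain ⟨c_lt_six, a_lt⟩ : c < 6 ∧ a < r + 1 - c := hca
      have degree_eq : a + (r - c - a) + c = r := by omega
      exact ⟨Finsupp.equivFunOnFinite.symm ![a, r - c - a, c, 0, 0],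
        ⟨⟨rfl, .inl ⟨rfl, c_lt_six, degree_eq⟩⟩, rfl⟩, rfl⟩
  rw [bijOn.ncard_eq, Set.ncard_coe_finset, Finset.card_sigma]
  simp only [Finset.card_range]

lemma ncard_standardExponents_sdiff_four_eq_zero (r : ℕ) :
    (standardExponents generatorExponents r \ {d | d 4 = 0}).ncard = min 3 r := by
  have bijOn : Set.BijOn (fun d : Fin 5 →₀ ℕ ↦ d 2)
      (standardExponents generatorExponents r \ {d | d 4 = 0}) (Finset.range (min 3 r)) := by
    simp only [Set.BijOn, Set.MapsTo, Set.InjOn, Set.SurjOn, Set.subset_def, Set.mem_sdiff,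
      mem_standardExponents_generatorExponents, Set.mem_ofPred_eq, Set.mem_image, Finset.mem_coe,
      Finset.mem_range]
    refine ⟨fun d hd ↦ by omega, fun d hd d' hd' h ↦ ?_, fun c hc ↦ ?_⟩
    · ext i
      fin_cases i <;> dsimp <;> omega
    · have c_lt_three : c < 3 := by omega
      have degree_eq : r - 1 - c + c + 1 = r := by omega
      exact ⟨Finsupp.equivFunOnFinite.symm ![0, r - 1 - c, c, 0, 1],
        ⟨⟨rfl, .inr ⟨rfl, rfl, c_lt_three, degree_eq⟩⟩, one_ne_zero⟩, rfl⟩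
  rw [bijOn.ncard_eq, Set.ncard_coe_finset, Finset.card_range]

theorem hilbertFn_span_generatorExponents (K : Type*) [Field K] (r : ℕ) :
    hilbertFn (Ideal.span ((fun s ↦ monomial s (1 : K)) '' generatorExponents)) r =
      ∑ c ∈ Finset.range 6, (r + 1 - c) + min 3 r := by
  rw [hilbertFn_span_monomial_image,
    ← Set.ncard_inter_add_ncard_sdiff_eq_ncard _ {d | d 4 = 0} (finite_standardExponents _ r),
    ncard_standardExponents_inter_four_eq_zero, ncard_standardExponents_sdiff_four_eq_zero]

/-- For `J = ⟨x_5^2, x_4, x_3^3x_5, x_3^6, x_1x_5⟩ ⊂ K[x_1,…,x_5]`,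
the Hilbert function `H` of `K[x_1,…,x_5]/J` satisfies `H(0)=1`, `H(1)=4`,
`H(2)=8`, `H(3)=13`, and `H(r)=6r−6` for all `r ≥ 4`; in particular `H` is
non-decreasing. -/
theorem stmt_14 (K : Type*) [Field K]
    (J : Ideal (MvPolynomial (Fin 5) K))
    (hJ : J = Ideal.span {X 4 ^ 2, X 3, X 2 ^ 3 * X 4, X 2 ^ 6, X 0 * X 4}) :
    hilbertFn J 0 = 1 ∧ hilbertFn J 1 = 4 ∧ hilbertFn J 2 = 8 ∧
      hilbertFn J 3 = 13 ∧ (∀ r : ℕ, 4 ≤ r → hilbertFn J r = 6 * r - 6) ∧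
      Monotone (hilbertFn J) := by
  have hilbertFn_eq (r : ℕ) :
      hilbertFn J r = ∑ c ∈ Finset.range 6, (r + 1 - c) + min 3 r := by
    rw [hJ, ← monomial_image_generatorExponents, hilbertFn_span_generatorExponents]
  refine ⟨hilbertFn_eq 0, hilbertFn_eq 1, hilbertFn_eq 2, hilbertFn_eq 3, fun r hr ↦ ?_,
    fun r s hrs ↦ ?_⟩
  · simp only [hilbertFn_eq, Finset.sum_range_succ, Finset.sum_range_zero]
    omega
  · simp only [hilbertFn_eq]
    gcongr
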